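/- Let v : ℝ → ℝ → ℝ be a smooth function of (x,t) with v_x(x,t) > 0 for all (x,t), satisfying the potential Calogero-Degasperis-Ibragimov-Shabat equation v_t = v_{xxx} - (3/4)·v_{xx}²/v_x + 3v_xv_{xx} + v_x³. Then h := v_x^{1/2}·e^{v} satisfies the linear equation h_t = h_{xxx}. -/

import Mathlib

/-!
Let `r = v_x + v_xx / (2 v_x)`, the logarithmic `x`-derivative of `h = v_x^{1/2} e^v`. The potential
CDIS equation says precisely that `v_t = v_x (2 r_x + r²)`. Since `v_xt = v_tx`, differentiating
this form in `x` gives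

  `h_t / h = v_t + v_tx / (2 v_x) = r (2 r_x + r²) + (r_xx + r r_x) = r_xx + 3 r r_x + r³`,

and the right-hand side is `h_xxx / h` for any `h` with `h_x = h r`.
-/

/-- Total `x`-derivative of a function of `(x, t)`. -/
noncomputable def dx (f : ℝ → ℝ → ℝ) : ℝ → ℝ → ℝ := fun x t => deriv (fun y => f y t) x

/-- Total `t`-derivative of a function of `(x, t)`. -/
noncomputable def dt (f : ℝ → ℝ → ℝ) : ℝ → ℝ → ℝ := fun x t => deriv (fun s => f x s) t

/-- The potential Calogero-Degasperis-Ibragimov-Shabat equation. -/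
def PotCDIS (v : ℝ → ℝ → ℝ) : Prop :=
  ∀ x t, dt v x t =
    dx (dx (dx v)) x t - (3/4) * (dx (dx v) x t)^2 / dx v x t
    + 3 * dx v x t * dx (dx v) x t + (dx v x t)^3

open Function (uncurry)

section OneVariable

theorem deriv_deriv_deriv_of_hasDerivAt_mul_self {𝕜 : Type*} [NontriviallyNormedField 𝕜]
    {h r : 𝕜 → 𝕜} (hh : ∀ x, HasDerivAt h (h x * r x) x) (hr : Differentiable 𝕜 r)
    (hr' : Differentiable 𝕜 (deriv r)) (x : 𝕜) :
    deriv (deriv (deriv h)) x = h x * (deriv (deriv r) x + 3 * r x * deriv r x + r x ^ 3) := by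
  have deriv_h : deriv h = fun y => h y * r y := funext fun y => (hh y).deriv
  have deriv_deriv_h : deriv (deriv h) = fun y => h y * (deriv r y + r y ^ 2) := by
    funext y
    rw [deriv_h, ((hh y).fun_mul (hr y).hasDerivAt).deriv]
    ring
  rw [deriv_deriv_h,
    ((hh x).fun_mul ((hr' x).hasDerivAt.fun_add ((hr x).hasDerivAt.fun_pow 2))).deriv]
  ring

theorem hasDerivAt_rpow_const_mul_exp {f g : ℝ → ℝ} {f' g' x : ℝ} (a : ℝ)
    (hf : HasDerivAt f f' x) (hg : HasDerivAt g g' x) (hfx : f x ≠ 0) :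
    HasDerivAt (fun y => f y ^ a * Real.exp (g y))
      (f x ^ a * Real.exp (g x) * (g' + a * f' / f x)) x := by
  refine ((hf.rpow_const (p := a) (Or.inl hfx)).fun_mul hg.exp).congr_deriv ?_
  rw [Real.rpow_sub_one hfx]
  ring

end OneVariable

section PartialDerivatives

variable {f : ℝ → ℝ → ℝ} {x t : ℝ}

theorem hasDerivAt_dx (hf : DifferentiableAt ℝ (uncurry f) (x, t)) :
    HasDerivAt (fun y => f y t) (dx f x t) x :=
  (hf.comp x (f := fun y => (y, t)) (by fun_prop)).hasDerivAt

theorem hasDerivAt_dt (hf : DifferentiableAt ℝ (uncurry f) (x, t)) :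
    HasDerivAt (fun s => f x s) (dt f x t) t :=
  (hf.comp t (f := fun s => (x, s)) (by fun_prop)).hasDerivAt

theorem dx_eq_fderiv (hf : DifferentiableAt ℝ (uncurry f) (x, t)) :
    dx f x t = fderiv ℝ (uncurry f) (x, t) (1, 0) :=
  (hf.hasFDerivAt.comp_hasDerivAt x (f := fun y => (y, t))
    ((hasDerivAt_id' x).prodMk (hasDerivAt_const x t))).deriv

theorem dt_eq_fderiv (hf : DifferentiableAt ℝ (uncurry f) (x, t)) :
    dt f x t = fderiv ℝ (uncurry f) (x, t) (0, 1) :=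
  (hf.hasFDerivAt.comp_hasDerivAt t (f := fun s => (x, s))
    ((hasDerivAt_const t x).prodMk (hasDerivAt_id' t))).deriv

theorem uncurry_dx_eq_fderiv (hf : Differentiable ℝ (uncurry f)) :
    uncurry (dx f) = fun p => fderiv ℝ (uncurry f) p (1, 0) :=
  funext fun p => dx_eq_fderiv (hf p)

theorem uncurry_dt_eq_fderiv (hf : Differentiable ℝ (uncurry f)) :
    uncurry (dt f) = fun p => fderiv ℝ (uncurry f) p (0, 1) :=
  funext fun p => dt_eq_fderiv (hf p)

theorem contDiff_dx {m n : WithTop ℕ∞} (hf : ContDiff ℝ n (uncurry f)) (hmn : m + 1 ≤ n) :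
    ContDiff ℝ m (uncurry (dx f)) := by
  have one_le : 1 ≤ n := le_add_self.trans hmn
  rw [uncurry_dx_eq_fderiv (hf.differentiable (one_pos.trans_le one_le).ne')]
  exact (hf.fderiv_right hmn).clm_apply contDiff_const

theorem dt_dx_comm (hf : ContDiff ℝ 2 (uncurry f)) : dt (dx f) = dx (dt f) := by
  funext x t
  have diff_f : Differentiable ℝ (uncurry f) := hf.differentiable two_ne_zero
  have diff_fderiv : Differentiable ℝ (fderiv ℝ (uncurry f)) :=
    (hf.fderiv_right (m := 1) one_add_one_eq_two.le).differentiable one_ne_zero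
  have diff_fderiv_apply (d : ℝ × ℝ) : Differentiable ℝ fun p => fderiv ℝ (uncurry f) p d :=
    diff_fderiv.clm_apply (differentiable_const d)
  have fderiv_fderiv_apply (d e : ℝ × ℝ) :
      fderiv ℝ (fun p => fderiv ℝ (uncurry f) p d) (x, t) e
        = fderiv ℝ (fderiv ℝ (uncurry f)) (x, t) e d := by
    simp [fderiv_clm_apply (diff_fderiv _) (differentiableAt_const d)]
  have symm : IsSymmSndFDerivAt ℝ (uncurry f) (x, t) :=
    hf.contDiffAt.isSymmSndFDerivAt minSmoothness_of_isRCLikeNormedField.le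
  have dx_f := uncurry_dx_eq_fderiv diff_f
  have dt_f := uncurry_dt_eq_fderiv diff_f
  rw [dt_eq_fderiv (dx_f ▸ diff_fderiv_apply _ _), dx_eq_fderiv (dt_f ▸ diff_fderiv_apply _ _),
    dx_f, dt_f, fderiv_fderiv_apply, fderiv_fderiv_apply]
  exact symm _ _

theorem dx_dx_dx_of_hasDerivAt_mul_self {r : ℝ → ℝ → ℝ}
    (hf : ∀ y, HasDerivAt (fun z => f z t) (f y t * r y t) y) (hr : ContDiff ℝ 2 (uncurry r)) :
    dx (dx (dx f)) x t
      = f x t * (dx (dx r) x t + 3 * r x t * dx r x t + r x t ^ 3) := by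
  have diff_r := hr.differentiable two_ne_zero
  have diff_rx := (contDiff_dx (m := 1) hr one_add_one_eq_two.le).differentiable one_ne_zero
  exact deriv_deriv_deriv_of_hasDerivAt_mul_self hf
    (fun y => (hasDerivAt_dx (diff_r (y, t))).differentiableAt)
    (fun y => (hasDerivAt_dx (diff_rx (y, t))).differentiableAt) x

end PartialDerivatives

/-- The logarithmic derivative `r = h_x / h` of `h = v_x^{1/2} e^v`, expressed through `v`, in terms
of which the potential CDIS equation takes a compact form. It is meaningful where `v_x ≠ 0`. -/
noncomputable def logSlope (v : ℝ → ℝ → ℝ) : ℝ → ℝ → ℝ :=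
  fun x t => dx v x t + 1 / 2 * dx (dx v) x t / dx v x t

section LogSlope

variable {v : ℝ → ℝ → ℝ}

theorem contDiff_logSlope {m n : WithTop ℕ∞} (hv : ContDiff ℝ n (uncurry v)) (hmn : m + 2 ≤ n)
    (hvx : ∀ x t, dx v x t ≠ 0) : ContDiff ℝ m (uncurry (logSlope v)) := by
  have hmn' : m + 1 + 1 ≤ n := by rwa [add_assoc, one_add_one_eq_two]
  have smooth_vx : ContDiff ℝ (m + 1) (uncurry (dx v)) := contDiff_dx hv hmn'
  have smooth_vx' : ContDiff ℝ m (uncurry (dx v)) := smooth_vx.of_le le_self_add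
  exact smooth_vx'.add ((contDiff_const.mul (contDiff_dx smooth_vx le_rfl)).div smooth_vx'
    fun p => hvx p.1 p.2)

theorem dx_logSlope (hv : ContDiff ℝ 3 (uncurry v)) {x t : ℝ} (hvx : dx v x t ≠ 0) :
    dx (logSlope v) x t = dx (dx v) x t
      + (dx (dx (dx v)) x t * dx v x t - dx (dx v) x t ^ 2) / (2 * dx v x t ^ 2) := by
  have smooth_vx : ContDiff ℝ 2 (uncurry (dx v)) := contDiff_dx hv (by norm_num)
  have smooth_vxx : ContDiff ℝ 1 (uncurry (dx (dx v))) := contDiff_dx smooth_vx (by norm_num)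
  have deriv_vx := hasDerivAt_dx (smooth_vx.differentiable two_ne_zero (x, t))
  have deriv_vxx := hasDerivAt_dx (smooth_vxx.differentiable one_ne_zero (x, t))
  refine (deriv_vx.fun_add ((deriv_vxx.const_mul (1 / 2)).fun_div deriv_vx hvx)).deriv.trans ?_
  field_simp

theorem PotCDIS.dt_eq (heq : PotCDIS v) (hv : ContDiff ℝ 3 (uncurry v)) {x t : ℝ}
    (hvx : dx v x t ≠ 0) :
    dt v x t = dx v x t * (2 * dx (logSlope v) x t + logSlope v x t ^ 2) := by
  rw [heq, dx_logSlope hv hvx, logSlope]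
  field_simp
  ring

theorem PotCDIS.dx_dt (heq : PotCDIS v) (hv : ContDiff ℝ 4 (uncurry v))
    (hvx : ∀ x t, dx v x t ≠ 0) (x t : ℝ) :
    dx (dt v) x t = dx (dx v) x t * (2 * dx (logSlope v) x t + logSlope v x t ^ 2)
      + dx v x t * (2 * dx (dx (logSlope v)) x t + 2 * logSlope v x t * dx (logSlope v) x t) := by
  have smooth_vx : ContDiff ℝ 3 (uncurry (dx v)) := contDiff_dx hv (by norm_num)
  have smooth_r : ContDiff ℝ 2 (uncurry (logSlope v)) := contDiff_logSlope hv (by norm_num) hvx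
  have smooth_rx : ContDiff ℝ 1 (uncurry (dx (logSlope v))) := contDiff_dx smooth_r (by norm_num)
  have deriv_vx := hasDerivAt_dx (smooth_vx.differentiable three_ne_zero (x, t))
  have deriv_r := hasDerivAt_dx (smooth_r.differentiable two_ne_zero (x, t))
  have deriv_rx := hasDerivAt_dx (smooth_rx.differentiable one_ne_zero (x, t))
  have vt_eq : dt v = fun x t => dx v x t * (2 * dx (logSlope v) x t + logSlope v x t ^ 2) :=
    funext₂ fun y s => heq.dt_eq (hv.of_le (by norm_num)) (hvx y s)
  rw [vt_eq]
  refine (deriv_vx.fun_mul ((deriv_rx.const_mul 2).fun_add (deriv_r.fun_pow 2))).deriv.trans ?_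
  ring

theorem PotCDIS.dt_add_dt_dx_div (heq : PotCDIS v) (hv : ContDiff ℝ 4 (uncurry v))
    (hvx : ∀ x t, dx v x t ≠ 0) (x t : ℝ) :
    dt v x t + 1 / 2 * dt (dx v) x t / dx v x t =
      dx (dx (logSlope v)) x t + 3 * logSlope v x t * dx (logSlope v) x t
        + logSlope v x t ^ 3 := by
  have vx_ne := hvx x t
  rw [dt_dx_comm (hv.of_le (by norm_num)), heq.dx_dt hv hvx,
    heq.dt_eq (hv.of_le (by norm_num)) vx_ne]
  calc _ = (dx v x t + 1 / 2 * dx (dx v) x t / dx v x t)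
          * (2 * dx (logSlope v) x t + logSlope v x t ^ 2)
        + (dx (dx (logSlope v)) x t + logSlope v x t * dx (logSlope v) x t) := by
        field_simp
        ring
    _ = logSlope v x t * (2 * dx (logSlope v) x t + logSlope v x t ^ 2)
        + (dx (dx (logSlope v)) x t + logSlope v x t * dx (logSlope v) x t) := rfl
    _ = _ := by ring

end LogSlope

theorem potential_cdis_linearisation_general
    (v : ℝ → ℝ → ℝ)
    (hv : ContDiff ℝ 4 (uncurry v))
    (hvx : ∀ x t, 0 < dx v x t)
    (heq : PotCDIS v)
    (h : ℝ → ℝ → ℝ)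
    (hh : ∀ x t, h x t = dx v x t ^ (1 / 2 : ℝ) * Real.exp (v x t)) :
    ∀ x t, dt h x t = dx (dx (dx h)) x t := by
  intro x t
  have h_eq : h = fun x t => dx v x t ^ (1 / 2 : ℝ) * Real.exp (v x t) := funext₂ hh
  have vx_ne (x t : ℝ) : dx v x t ≠ 0 := (hvx x t).ne'
  have diff_v := hv.differentiable four_ne_zero
  have diff_vx := (contDiff_dx (m := 3) hv (by norm_num)).differentiable three_ne_zero
  have smooth_r : ContDiff ℝ 2 (uncurry (logSlope v)) := contDiff_logSlope hv (by norm_num) vx_ne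
  have ht : dt h x t = h x t * (dt v x t + 1 / 2 * dt (dx v) x t / dx v x t) := by
    rw [h_eq]
    exact (hasDerivAt_rpow_const_mul_exp _ (hasDerivAt_dt (diff_vx _)) (hasDerivAt_dt (diff_v _))
      (vx_ne x t)).deriv
  have hx (y : ℝ) : HasDerivAt (fun z => h z t) (h y t * logSlope v y t) y := by
    rw [h_eq]
    exact hasDerivAt_rpow_const_mul_exp _ (hasDerivAt_dx (diff_vx _)) (hasDerivAt_dx (diff_v _))
      (vx_ne y t)
  rw [ht, heq.dt_add_dt_dx_div hv vx_ne, dx_dx_dx_of_hasDerivAt_mul_self hx smooth_r]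

/-- If `v` solves the potential CDIS equation with `v_x > 0`, then `h = v_x^{1/2}·e^v`
solves the linear equation `h_t = h_xxx`. -/
theorem potential_cdis_linearisation
    (v : ℝ → ℝ → ℝ)
    (hv : ContDiff ℝ (⊤ : ℕ∞) (fun p : ℝ × ℝ => v p.1 p.2))
    (hvx : ∀ x t, 0 < dx v x t)
    (heq : PotCDIS v)
    (h : ℝ → ℝ → ℝ)
    (hh : ∀ x t, h x t = (dx v x t) ^ ((1/2) : ℝ) * Real.exp (v x t)) :
    ∀ x t, dt h x t = dx (dx (dx h)) x t := by
  exact potential_cdis_linearisation_general v (hv.of_le (WithTop.coe_le_coe.2 le_top)) hvx heq h hh
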